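/- For every integer μ with |μ| > 1 there exists Λ > 0 with the following property. Let λ be an odd integer with |λ| ≥ Λ. Then there exist ε > 0 and a C¹ map F = (F₁, F₂) : ℝ² → ℝ² satisfying the Klein-bottle equivariance F(x+1, y) = F(x, y) + (μ, 0) and F(−x, y+1) = (−F₁(x,y), F₂(x,y) + λ) (so F descends to an endomorphism of the Klein bottle 𝕂² homotopic to the linear endomorphism L[x,y] = [μx, λy]), such that every C¹ map G : ℝ² → ℝ² with the same equivariance and sup_x (‖G(x) − F(x)‖ + ‖DG(x) − DF(x)‖) < ε satisfies: (i) there exists z ∈ ℝ² at which DG(z) is not surjective; and (ii) for all nonempty open sets U, V ⊆ ℝ² there exist n ≥ 1, x ∈ U, (v₁, v₂) ∈ V and integers k, m with Gⁿ(x) = ((−1)^k v₁ + m, v₂ + k) (the induced endomorphism of 𝕂² is transitive). -/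

import Mathlib

/-!
The unperturbed map is the skew product
`F (x, y) = (f x + sin (π y), lam * y)` with `f x = μ x - (μ - c) / (2π) * sin (2π x)`, where
`c = -1/2` if `μ > 0` and `c = 1/2` if `μ < 0`.

*Critical points.* `f' 0 = c` and `f' (1/2) = 2μ - c` have opposite signs, so `det DG` changes sign
for every `G` which is `C¹`-close to `F`, and hence vanishes somewhere.

*Transitivity.* Fix a small `r > 0` such that `f` is close to `x ↦ c x` on `[-r, r]`. If `|lam|` is
large compared with `1 / r`, every `G` close to `F` has the following properties.

* Vertical expansion (`IsSteep.cone`): `G` preserves the cone `|dx| ≤ (r/2) |dy|` and expands heights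
  there. Thus the images of a vertical line are the steep curves `t ↦ G^[n] (x₀, t)`, and the time
  `t` is controlled by the height of the image (`IsSteep.curve`).
* Horizontal contraction on the strip `|x| ≤ r`.
* Covering (`IsSteep.exists_preimage`): the term `sin (π y)` moves points horizontally, and
  `y ↦ lam * y` has many inverse branches modulo `2`, so, modulo `ℤ × 2ℤ`, every point has a
  preimage in the narrower strip `|x| ≤ r / 2`.

Given a target `v`, the image of a short vertical segment eventually passes at distance at most `r/2`
from `v`, at the height of `v` (`IsSteep.approach_zero`). Applying this to a preimage `w` of `v` in
the strip instead of `v`, and mapping once more, brings the curve closer to `v` by a factor `9/10`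
because of the contraction (`IsSteep.approach`). So the images of the segment accumulate on `v`
modulo `ℤ × 2ℤ`, which is a subgroup of the deck group of the Klein bottle.
-/

noncomputable section

open Real Set

/-! ### Maps with steep curves and a contracting strip -/

/-- The quantitative properties, satisfied by every `G` close to
`(x, y) ↦ (f x + sin (π y), lam * y)`, which are responsible for transitivity. `C` is a global
horizontal Lipschitz constant, and `r` the half-width of the strip on which `G` contracts
horizontally. -/
structure IsSteep (G : ℝ × ℝ → ℝ × ℝ) (f : ℝ → ℝ) (μ lam : ℤ) (C r : ℝ) : Prop where
  r_pos : 0 < r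
  r_le : r ≤ 1 / 2
  C_mul_r : C * r ≤ 1 / 2
  lam_large : 80 ≤ r * (|(lam : ℝ)| - 10)
  cont : Continuous G
  add_one : ∀ x y, G (x + 1, y) = G (x, y) + ((μ : ℝ), 0)
  add_two : ∀ x y, G (x, y + 2) = G (x, y) + (0, 2 * (lam : ℝ))
  near_fst : ∀ p, |(G p).1 - (f p.1 + sin (π * p.2))| ≤ r / 10
  near_snd : ∀ p, |(G p).2 - lam * p.2| ≤ r / 10
  f_lip : ∀ x x', |f x - f x'| ≤ C * |x - x'|
  lip_fst : ∀ p q, |(G p).1 - (G q).1| ≤ C * |p.1 - q.1| + 5 * |p.2 - q.2|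
  lip_snd : ∀ p q, |(G p).2 - (G q).2 - lam * (p.2 - q.2)|
    ≤ 1 / 10 * (|p.1 - q.1| + |p.2 - q.2|)
  contracting : ∀ p q, |p.1| ≤ r → |q.1| ≤ r → p.2 = q.2 →
    |(G p).1 - (G q).1| ≤ 7 / 10 * |p.1 - q.1|
  covering : (r / 5 ≤ f (r / 2) ∧ f (-(r / 2)) ≤ -(r / 5)) ∨
    (f (r / 2) ≤ -(r / 5) ∧ r / 5 ≤ f (-(r / 2)))

lemma exists_two_mul_int_near (z : ℝ) : ∃ k : ℤ, |2 * (k : ℝ) - z| ≤ 1 := by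
  refine ⟨round (z / 2), ?_⟩
  have h := abs_sub_round (z / 2)
  rw [abs_le] at h ⊢
  constructor <;> linarith [h.1, h.2]

lemma surjective_of_near_linear {φ : ℝ → ℝ} (hφ : Continuous φ) {L B : ℝ} (hL : L ≠ 0)
    (h : ∀ t, |φ t - L * t| ≤ B) : Function.Surjective φ := by
  intro z
  have h1 := h ((z + B) / L)
  have h2 := h ((z - B) / L)
  rw [mul_div_cancel₀ _ hL, abs_le] at h1 h2
  exact mem_range_of_exists_le_of_exists_ge hφ ⟨(z - B) / L, by linarith⟩ ⟨(z + B) / L, by linarith⟩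

lemma abs_sin_pi_sub_le (y y' : ℝ) : |sin (π * y) - sin (π * y')| ≤ 4 * |y - y'| := by
  have h := Real.lipschitzWith_sin.dist_le_mul (π * y) (π * y')
  rw [Real.dist_eq, Real.dist_eq, ← mul_sub, abs_mul, abs_of_pos pi_pos] at h
  simp only [NNReal.coe_one, one_mul] at h
  exact h.trans (mul_le_mul_of_nonneg_right pi_le_four (abs_nonneg _))

namespace IsSteep

variable {G : ℝ × ℝ → ℝ × ℝ} {f : ℝ → ℝ} {μ lam : ℤ} {C r : ℝ}

lemma lam_ge (h : IsSteep G f μ lam C r) : 170 ≤ |(lam : ℝ)| := by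
  have h1 := h.lam_large
  have h2 := h.r_pos
  have h3 := h.r_le
  by_contra! hc
  nlinarith

lemma lam_ne (h : IsSteep G f μ lam C r) : (lam : ℝ) ≠ 0 := by
  intro h0
  have := h.lam_ge
  rw [h0, abs_zero] at this
  linarith

lemma add_int (h : IsSteep G f μ lam C r) (p : ℝ × ℝ) (m k : ℤ) :
    G (p.1 + m, p.2 + 2 * k) = ((G p).1 + μ * m, (G p).2 + 2 * (lam * k)) := by
  have hx : ∀ y, Function.Periodic (fun x => G (x, y) - ((μ : ℝ) * x, 0)) 1 := by
    intro y x
    simp only [h.add_one]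
    ext <;> simp
    ring
  have hy : ∀ x, Function.Periodic (fun y => G (x, y) - (0, (lam : ℝ) * y)) 2 := by
    intro x y
    simp only [h.add_two]
    ext <;> simp
    ring
  have h1 := (hx (p.2 + k * 2)).int_mul m p.1
  have h2 := (hy p.1).int_mul k p.2
  simp only [mul_one] at h1 h2
  have h1a := congrArg Prod.fst h1
  have h1b := congrArg Prod.snd h1
  have h2a := congrArg Prod.fst h2
  have h2b := congrArg Prod.snd h2
  simp only [Prod.fst_sub, Prod.snd_sub] at h1a h1b h2a h2b
  rw [mul_comm (2 : ℝ) (k : ℝ)]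
  ext
  · simp only; linarith
  · simp only; linarith

/-- The steep cone `|dx| ≤ (r/2) |dy|` is mapped into itself, and heights at least double in it. -/
lemma cone (h : IsSteep G f μ lam C r) {p q : ℝ × ℝ}
    (hpq : |p.1 - q.1| ≤ r / 2 * |p.2 - q.2|) :
    |(G p).1 - (G q).1| ≤ r / 2 * |(G p).2 - (G q).2| ∧
      2 * |p.2 - q.2| ≤ |(G p).2 - (G q).2| := by
  have h1 := h.lip_fst p q
  have h2 := h.lip_snd p q
  have hr := h.r_pos
  have hr' := h.r_le
  have hC := h.C_mul_r
  have hl := h.lam_ge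
  have hL := h.lam_large
  have hd := abs_nonneg (p.2 - q.2)
  have h3 : |(lam : ℝ)| * |p.2 - q.2| - |(G p).2 - (G q).2|
      ≤ 1 / 10 * (|p.1 - q.1| + |p.2 - q.2|) := by
    rw [← abs_mul]
    have := abs_sub_abs_le_abs_sub (lam * (p.2 - q.2)) ((G p).2 - (G q).2)
    exact this.trans (by rwa [abs_sub_comm])
  have h4 : (|(lam : ℝ)| - 1) * |p.2 - q.2| ≤ |(G p).2 - (G q).2| := by nlinarith
  have hC0 : C * |p.1 - q.1| ≤ 1 / 4 * |p.2 - q.2| := by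
    rcases le_total 0 C with h0 | h0
    · nlinarith [mul_le_mul_of_nonneg_left hpq h0]
    · nlinarith [mul_nonneg (neg_nonneg.2 h0) (abs_nonneg (p.1 - q.1))]
  constructor
  · have h5 : r / 2 * ((|(lam : ℝ)| - 1) * |p.2 - q.2|) ≤ r / 2 * |(G p).2 - (G q).2| :=
      mul_le_mul_of_nonneg_left h4 (by linarith)
    have h6 : 40 * |p.2 - q.2| ≤ r / 2 * (|(lam : ℝ)| - 1) * |p.2 - q.2| :=
      mul_le_mul_of_nonneg_right (by nlinarith) hd
    nlinarith
  · nlinarith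

/-- The `n`-th image of a vertical line is a steep curve, and its heights expand the time
parameter by `2 ^ n`. -/
lemma curve (h : IsSteep G f μ lam C r) (x₀ : ℝ) (n : ℕ) (t s : ℝ) :
    |(G^[n] (x₀, t)).1 - (G^[n] (x₀, s)).1|
      ≤ r / 2 * |(G^[n] (x₀, t)).2 - (G^[n] (x₀, s)).2| ∧
    2 ^ n * |t - s| ≤ |(G^[n] (x₀, t)).2 - (G^[n] (x₀, s)).2| := by
  induction n with
  | zero =>
    have := mul_nonneg h.r_pos.le (abs_nonneg (t - s))
    simp
    linarith
  | succ n ih =>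
    simp only [Function.iterate_succ_apply']
    obtain ⟨h1, h2⟩ := h.cone ih.1
    refine ⟨h1, ?_⟩
    rw [pow_succ]
    linarith [ih.2]

lemma continuous_curve (h : IsSteep G f μ lam C r) (x₀ : ℝ) (n : ℕ) :
    Continuous fun t : ℝ => G^[n] (x₀, t) :=
  (h.cont.iterate n).comp (by fun_prop)

lemma surjective_height (h : IsSteep G f μ lam C r) (x₀ : ℝ) (n : ℕ) :
    Function.Surjective fun t : ℝ => (G^[n] (x₀, t)).2 := by
  have key : ∃ B : ℝ, ∀ t, |(G^[n] (x₀, t)).2 - (lam : ℝ) ^ n * t| ≤ B := by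
    induction n with
    | zero => exact ⟨0, by simp⟩
    | succ n ih =>
      obtain ⟨B, hB⟩ := ih
      refine ⟨r / 10 + |(lam : ℝ)| * B, fun t => ?_⟩
      rw [Function.iterate_succ_apply']
      have h1 := h.near_snd (G^[n] (x₀, t))
      have h2 := mul_le_mul_of_nonneg_left (hB t) (abs_nonneg (lam : ℝ))
      rw [← abs_mul] at h2
      calc _ = |((G (G^[n] (x₀, t))).2 - lam * (G^[n] (x₀, t)).2)
            + lam * ((G^[n] (x₀, t)).2 - (lam : ℝ) ^ n * t)| := by congr 1; ring
        _ ≤ _ := (abs_add_le _ _).trans (add_le_add h1 h2)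
  obtain ⟨B, hB⟩ := key
  exact surjective_of_near_linear (continuous_snd.comp (h.continuous_curve x₀ n))
    (pow_ne_zero n h.lam_ne) hB

/-- Modulo `ℤ × 2ℤ`, every point has a preimage in the strip `|x| ≤ r / 2`. -/
lemma exists_preimage (h : IsSteep G f μ lam C r) (v : ℝ × ℝ) :
    ∃ (w : ℝ × ℝ) (m k : ℤ), |w.1| ≤ r / 2 ∧ G w = (v.1 + m, v.2 + 2 * k) := by
  have hr := h.r_pos
  have hl := h.lam_ge
  -- A height `θ` at which the horizontal displacement is the right one modulo `1`.
  obtain ⟨m, hm⟩ : ∃ m : ℤ, |v.1 + m| ≤ 1 := by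
    refine ⟨-round v.1, ?_⟩
    have := abs_sub_round v.1
    push_cast
    rw [← sub_eq_add_neg]
    linarith
  obtain ⟨θ, hθ⟩ : ∃ θ : ℝ, sin (π * θ) = v.1 + m := by
    refine ⟨arcsin (v.1 + m) / π, ?_⟩
    rw [mul_div_cancel₀ _ pi_ne_zero]
    exact sin_arcsin (abs_le.1 hm).1 (abs_le.1 hm).2
  obtain ⟨k, hk⟩ := exists_two_mul_int_near (lam * θ - v.2)
  -- The curve `x ↦ (x, Y x)` which is mapped to the height `v.2 + 2 * k`.
  have hY : ∀ x : ℝ, ∃ y : ℝ, (G (x, y)).2 = v.2 + 2 * k := fun x =>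
    surjective_of_near_linear (φ := fun y => (G (x, y)).2)
      (continuous_snd.comp (h.cont.comp (by fun_prop))) h.lam_ne
      (fun y => h.near_snd (x, y)) _
  choose Y hY using hY
  have hYc : Continuous Y := by
    refine (LipschitzWith.of_dist_le_mul (K := 1) fun x x' => ?_).continuous
    have h1 := h.lip_snd (x, Y x) (x', Y x')
    simp only [hY, sub_self, zero_sub, abs_neg, abs_mul] at h1
    rw [Real.dist_eq, Real.dist_eq, NNReal.coe_one, one_mul]
    nlinarith [abs_nonneg (Y x - Y x'), abs_nonneg (x - x')]
  have hclose : ∀ x, |(G (x, Y x)).1 - (f x + (v.1 + m))| ≤ r / 5 := by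
    intro x
    have h1 := h.near_fst (x, Y x)
    have h2 := h.near_snd (x, Y x)
    have h3 := abs_sin_pi_sub_le (Y x) θ
    rw [hY] at h2
    rw [hθ] at h3
    simp only at h1 h2
    have h4 : |(lam : ℝ)| * |Y x - θ| ≤ r / 10 + 1 := by
      rw [← abs_mul, abs_le]
      rw [abs_le] at h2 hk
      constructor <;> linarith [h2.1, h2.2, hk.1, hk.2]
    have h5 : 4 * |Y x - θ| ≤ r / 10 := by
      have h6 := mul_le_mul_of_nonneg_left h4 hr.le
      have h7 : 80 * |Y x - θ| ≤ r * (|(lam : ℝ)| * |Y x - θ|) := by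
        rw [← mul_assoc]
        exact mul_le_mul_of_nonneg_right (by linarith [h.lam_large]) (abs_nonneg _)
      nlinarith [h.r_le]
    have h8 := h3.trans h5
    rw [abs_le] at h1 h8 ⊢
    constructor <;> linarith [h1.1, h1.2, h8.1, h8.2]
  have hψ : Continuous fun x => (G (x, Y x)).1 :=
    continuous_fst.comp (h.cont.comp (by fun_prop))
  have ha := abs_le.1 (hclose (r / 2))
  have hb := abs_le.1 (hclose (-(r / 2)))
  obtain ⟨x, hx, hx'⟩ : ∃ x ∈ Icc (-(r / 2)) (r / 2), (G (x, Y x)).1 = v.1 + m := by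
    rcases h.covering with ⟨h1, h2⟩ | ⟨h1, h2⟩
    · exact intermediate_value_Icc (by linarith) hψ.continuousOn
        ⟨by linarith [hb.2], by linarith [ha.1]⟩
    · exact intermediate_value_Icc' (by linarith) hψ.continuousOn
        ⟨by linarith [ha.2], by linarith [hb.1]⟩
  exact ⟨(x, Y x), m, k, abs_le.2 hx, Prod.ext hx' (hY x)⟩

/-- The image of a vertical segment of length of order `2 ^ (-M)` under `G^[M + 1]` passes, modulo
`ℤ × 2ℤ`, at horizontal distance at most `r / 2` from any given point. -/
lemma approach_zero (h : IsSteep G f μ lam C r) (x₀ y₀ : ℝ) (M : ℕ) (v : ℝ × ℝ) :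
    ∃ (t : ℝ) (m k : ℤ), (G^[M + 1] (x₀, t)).2 = v.2 + 2 * k ∧
      |(G^[M + 1] (x₀, t)).1 - (v.1 + m)| ≤ r / 2 ∧ 2 ^ M * |t - y₀| ≤ 2 := by
  have hr := h.r_pos
  have hr' := h.r_le
  obtain ⟨j, hj⟩ := exists_two_mul_int_near (G^[M] (x₀, y₀)).2
  -- Between heights `2 j - 1/2` and `2 j + 1/2` the term `sin (π y)` increases by `2`.
  obtain ⟨s₁, hs₁⟩ := h.surjective_height x₀ M (2 * j - 1 / 2)
  obtain ⟨s₂, hs₂⟩ := h.surjective_height x₀ M (2 * j + 1 / 2)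
  simp only at hs₁ hs₂
  rw [abs_le] at hj
  have e₁ : 2 ^ M * |s₁ - y₀| ≤ 3 / 2 := by
    refine (h.curve x₀ M s₁ y₀).2.trans ?_
    rw [hs₁, abs_le]
    constructor <;> linarith [hj.1, hj.2]
  have e₂ : 2 ^ M * |s₂ - y₀| ≤ 3 / 2 := by
    refine (h.curve x₀ M s₂ y₀).2.trans ?_
    rw [hs₂, abs_le]
    constructor <;> linarith [hj.1, hj.2]
  have hsin₁ : sin (π * (2 * j - 1 / 2)) = -1 := by
    rw [show π * (2 * (j : ℝ) - 1 / 2) = -(π / 2) + j * (2 * π) by ring,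
      sin_add_int_mul_two_pi, sin_neg, sin_pi_div_two]
  have hsin₂ : sin (π * (2 * j + 1 / 2)) = 1 := by
    rw [show π * (2 * (j : ℝ) + 1 / 2) = π / 2 + j * (2 * π) by ring,
      sin_add_int_mul_two_pi, sin_pi_div_two]
  have n₁ := h.near_fst (G^[M] (x₀, s₁))
  have n₂ := h.near_fst (G^[M] (x₀, s₂))
  rw [hs₁, hsin₁] at n₁
  rw [hs₂, hsin₂] at n₂
  have hf := h.f_lip (G^[M] (x₀, s₂)).1 (G^[M] (x₀, s₁)).1
  have hx := (h.curve x₀ M s₂ s₁).1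
  rw [hs₁, hs₂, show (2 * (j : ℝ) + 1 / 2 - (2 * j - 1 / 2)) = 1 by ring, abs_one, mul_one] at hx
  have hf' : |f (G^[M] (x₀, s₂)).1 - f (G^[M] (x₀, s₁)).1| ≤ 1 / 4 := by
    refine hf.trans ?_
    rcases le_total 0 C with h0 | h0
    · nlinarith [h.C_mul_r]
    · nlinarith [abs_nonneg ((G^[M] (x₀, s₂)).1 - (G^[M] (x₀, s₁)).1)]
  rw [abs_le] at n₁ n₂ hf'
  set ψ : ℝ → ℝ := fun t => (G (G^[M] (x₀, t))).1 with hψ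
  have hψc : Continuous ψ := continuous_fst.comp (h.cont.comp (h.continuous_curve x₀ M))
  have hgap : ψ s₁ + 1 ≤ ψ s₂ := by
    simp only [hψ]
    linarith [n₁.2, n₂.1, hf'.1]
  obtain ⟨s, hs, hs'⟩ : v.1 + ⌈ψ s₁ - v.1⌉ ∈ ψ '' uIcc s₁ s₂ := by
    refine intermediate_value_uIcc hψc.continuousOn ?_
    rw [uIcc_of_le (by linarith)]
    constructor
    · linarith [Int.le_ceil (ψ s₁ - v.1)]
    · linarith [Int.ceil_lt_add_one (ψ s₁ - v.1)]
  have hP : (0 : ℝ) < 2 ^ M := by positivity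
  have e : 2 ^ M * |s - y₀| ≤ 3 / 2 := by
    rw [← le_div_iff₀' hP, ← Real.dist_eq, ← Metric.mem_closedBall] at e₁ e₂ ⊢
    exact (convex_closedBall y₀ (3 / 2 / 2 ^ M)).ordConnected.uIcc_subset e₁ e₂ hs
  obtain ⟨k, hk⟩ := exists_two_mul_int_near ((G^[M + 1] (x₀, s)).2 - v.2)
  obtain ⟨t, ht⟩ := h.surjective_height x₀ (M + 1) (v.2 + 2 * k)
  simp only at ht
  obtain ⟨c₁, c₂⟩ := h.curve x₀ (M + 1) t s
  have hheight : |(G^[M + 1] (x₀, t)).2 - (G^[M + 1] (x₀, s)).2| ≤ 1 := by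
    rw [ht]
    convert hk using 2
    ring
  have hs'' : (G^[M + 1] (x₀, s)).1 = v.1 + ⌈ψ s₁ - v.1⌉ := by
    rw [Function.iterate_succ_apply']
    exact hs'
  refine ⟨t, ⌈ψ s₁ - v.1⌉, k, ht, ?_, ?_⟩
  · rw [← hs'']
    nlinarith
  · have := mul_le_mul_of_nonneg_left (abs_sub_le t s y₀) hP.le
    rw [pow_succ] at c₂
    nlinarith

/-- Each further iterate improves the horizontal accuracy by the factor `9 / 10`: the previous
accuracy is used for a preimage of `v` in the contracting strip. -/
lemma approach (h : IsSteep G f μ lam C r) (x₀ y₀ : ℝ) (M j : ℕ) (v : ℝ × ℝ) :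
    ∃ (t : ℝ) (m k : ℤ), (G^[M + 1 + j] (x₀, t)).2 = v.2 + 2 * k ∧
      |(G^[M + 1 + j] (x₀, t)).1 - (v.1 + m)| ≤ r / 2 * (9 / 10) ^ j ∧
      2 ^ M * |t - y₀| ≤ 3 - (1 / 2) ^ j := by
  induction j generalizing v with
  | zero =>
    obtain ⟨t, m, k, h1, h2, h3⟩ := h.approach_zero x₀ y₀ M v
    exact ⟨t, m, k, h1, by simpa using h2, by norm_num; linarith⟩
  | succ j ih =>
    have hr := h.r_pos
    have hr' := h.r_le
    obtain ⟨w, m, k, hw, hGw⟩ := h.exists_preimage v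
    obtain ⟨t, m', k', h1, h2, h3⟩ := ih w
    set n := M + 1 + j with hn
    set P := G^[n] (x₀, t) with hP
    set δ := r / 2 * (9 / 10 : ℝ) ^ j with hδ
    have hδ0 : 0 ≤ δ := by positivity
    have hδr : δ ≤ r / 2 :=
      mul_le_of_le_one_right (by linarith) (pow_le_one₀ (by norm_num) (by norm_num))
    -- Translate back to the strip, where the contraction is available.
    set P' : ℝ × ℝ := (P.1 - m', P.2 - 2 * k') with hP'
    have hPP : G P = ((G P').1 + μ * m', (G P').2 + 2 * (lam * k')) := by
      rw [← h.add_int P' m' k']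
      simp [hP']
    have hd : |P'.1 - w.1| ≤ δ := by
      have : P'.1 - w.1 = P.1 - (w.1 + m') := by simp only [hP']; ring
      rwa [this]
    have hP2 : P'.2 = w.2 := by simp only [hP']; linarith
    have hP1 : |P'.1| ≤ r := by
      rw [abs_le] at hd hw ⊢
      constructor <;> linarith [hd.1, hd.2, hw.1, hw.2]
    have c1 := h.contracting P' w hP1 (by linarith) hP2
    have c2 := h.lip_snd P' w
    rw [hP2, sub_self, mul_zero, sub_zero, abs_zero, add_zero] at c2
    rw [hGw] at c1 c2
    simp only at c1 c2
    obtain ⟨t', ht'⟩ := h.surjective_height x₀ (n + 1) (v.2 + 2 * (k + lam * k' : ℤ))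
    simp only at ht'
    obtain ⟨d1, d2⟩ := h.curve x₀ (n + 1) t' t
    have hs : G^[n + 1] (x₀, t) = G P := Function.iterate_succ_apply' _ _ _
    have hheight : |(G^[n + 1] (x₀, t')).2 - (G^[n + 1] (x₀, t)).2| ≤ δ / 10 := by
      rw [ht', hs, hPP, abs_sub_comm]
      push_cast
      have : (G P').2 + 2 * (lam * k') - (v.2 + 2 * (k + lam * k')) = (G P').2 - (v.2 + 2 * k) := by
        ring
      rw [this]
      linarith
    have hfst : |(G^[n + 1] (x₀, t)).1 - (v.1 + (m + μ * m' : ℤ))| ≤ 7 / 10 * δ := by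
      rw [hs, hPP]
      push_cast
      have : (G P').1 + μ * m' - (v.1 + (m + μ * m')) = (G P').1 - (v.1 + m) := by ring
      rw [this]
      linarith
    refine ⟨t', m + μ * m', k + lam * k', ht', ?_, ?_⟩
    · have := abs_sub_le (G^[n + 1] (x₀, t')).1 (G^[n + 1] (x₀, t)).1 (v.1 + (m + μ * m' : ℤ))
      have e1 : r / 2 * (9 / 10 : ℝ) ^ (j + 1) = 9 / 10 * δ := by rw [hδ, pow_succ]; ring
      rw [e1]
      change |(G^[n + 1] (x₀, t')).1 - (v.1 + (m + μ * m' : ℤ))| ≤ 9 / 10 * δ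
      nlinarith
    · have e2 : 2 ^ (n + 1) * |t' - t| ≤ 1 := by linarith
      have e3 : (2 : ℝ) ^ (n + 1) = 2 ^ M * (2 ^ (j + 1)) * 2 := by
        rw [hn]; ring
      have e4 : 2 ^ M * |t' - t| ≤ (1 / 2) ^ (j + 1) := by
        rw [one_div, inv_pow, ← one_div, le_div_iff₀ (by positivity)]
        rw [e3] at e2
        have : 0 ≤ 2 ^ M * |t' - t| * 2 ^ (j + 1) := by positivity
        linarith
      have e5 := mul_le_mul_of_nonneg_left (abs_sub_le t' t y₀) (by positivity : (0 : ℝ) ≤ 2 ^ M)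
      have e6 : ((1 : ℝ) / 2) ^ (j + 1) = 1 / 2 * (1 / 2) ^ j := by rw [pow_succ]; ring
      rw [e6] at e4 ⊢
      linarith

lemma transitive (h : IsSteep G f μ lam C r) (U V : Set (ℝ × ℝ)) (hU : IsOpen U) (hV : IsOpen V)
    (hU' : U.Nonempty) (hV' : V.Nonempty) :
    ∃ n : ℕ, 1 ≤ n ∧ ∃ x ∈ U, ∃ v ∈ V, ∃ k m : ℤ,
      G^[n] x = ((-1 : ℝ) ^ k * v.1 + (m : ℝ), v.2 + (k : ℝ)) := by
  obtain ⟨⟨x₀, y₀⟩, hxy⟩ := hU'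
  obtain ⟨v, hv⟩ := hV'
  obtain ⟨η, hη, hUη⟩ := Metric.isOpen_iff.1 hU _ hxy
  obtain ⟨σ, hσ, hVσ⟩ := Metric.isOpen_iff.1 hV _ hv
  obtain ⟨M, hM⟩ := exists_pow_lt_of_lt_one (show 0 < η / 3 by positivity)
    (show (1 / 2 : ℝ) < 1 by norm_num)
  obtain ⟨j, hj⟩ := exists_pow_lt_of_lt_one hσ (show (9 / 10 : ℝ) < 1 by norm_num)
  obtain ⟨t, m, k, h1, h2, h3⟩ := h.approach x₀ y₀ M j v
  refine ⟨M + 1 + j, by omega, (x₀, t), hUη ?_,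
    ((G^[M + 1 + j] (x₀, t)).1 - m, v.2), hVσ ?_, 2 * k, m, ?_⟩
  · rw [Metric.mem_ball, Prod.dist_eq, dist_self, Real.dist_eq, max_lt_iff]
    refine ⟨hη, ?_⟩
    have h4 : (0 : ℝ) < (1 / 2) ^ j := by positivity
    have h5 : 2 ^ M * |t - y₀| ≤ 3 := by linarith
    rw [← le_div_iff₀' (by positivity)] at h5
    rw [one_div, inv_pow] at hM
    calc |t - y₀| ≤ 3 / 2 ^ M := h5
      _ = 3 * (2 ^ M)⁻¹ := div_eq_mul_inv _ _
      _ < η := by linarith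
  · rw [Metric.mem_ball, Prod.dist_eq, dist_self, Real.dist_eq, max_lt_iff]
    refine ⟨?_, hσ⟩
    have h4 : (0 : ℝ) < (9 / 10) ^ j := by positivity
    have h5 := h.r_le
    rw [show (G^[M + 1 + j] (x₀, t)).1 - m - v.1 = (G^[M + 1 + j] (x₀, t)).1 - (v.1 + m) by ring]
    nlinarith
  · have : ((-1 : ℝ)) ^ (2 * k) = 1 := by
      rw [zpow_mul]
      norm_num
    rw [this]
    ext
    · simp
    · simp [h1]

end IsSteep

/-! ### The unperturbed map -/

/-- The horizontal part of the unperturbed map. It lifts a circle map of degree `μ`, is odd, and has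
derivative `c` at `0` and `2 * μ - c` at `1 / 2`. -/
def fiberMap (μ : ℤ) (c x : ℝ) : ℝ := μ * x - (μ - c) / (2 * π) * sin (2 * π * x)

/-- The unperturbed map, a skew product over `y ↦ lam * y`. -/
def skewMap (μ lam : ℤ) (c : ℝ) (p : ℝ × ℝ) : ℝ × ℝ :=
  (fiberMap μ c p.1 + sin (π * p.2), lam * p.2)

lemma hasDerivAt_fiberMap (μ : ℤ) (c x : ℝ) :
    HasDerivAt (fiberMap μ c) (μ - (μ - c) * cos (2 * π * x)) x := by
  have h1 : HasDerivAt (fun x : ℝ => sin (2 * π * x)) (cos (2 * π * x) * (2 * π)) x := by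
    simpa using ((hasDerivAt_id x).const_mul (2 * π)).sin
  have h2 : HasDerivAt (fun x : ℝ => (μ : ℝ) * x) μ x := by
    simpa using (hasDerivAt_id x).const_mul (μ : ℝ)
  have h := h2.sub (h1.const_mul ((μ - c) / (2 * π)))
  have e : (μ : ℝ) - (μ - c) * cos (2 * π * x)
      = μ - (μ - c) / (2 * π) * (cos (2 * π * x) * (2 * π)) := by
    field_simp
  rw [e]
  exact h

lemma fiberMap_lipschitz (μ : ℤ) (c x x' : ℝ) :
    |fiberMap μ c x - fiberMap μ c x'| ≤ (|(μ : ℝ)| + |μ - c|) * |x - x'| := by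
  have := Convex.norm_image_sub_le_of_norm_hasDerivWithin_le (s := univ) (x := x') (y := x)
    (fun y _ => (hasDerivAt_fiberMap μ c y).hasDerivWithinAt) (C := |(μ : ℝ)| + |μ - c|)
    (fun y _ => ?_) convex_univ (mem_univ _) (mem_univ _)
  · simpa [Real.norm_eq_abs] using this
  · rw [Real.norm_eq_abs]
    refine (abs_sub _ _).trans ?_
    rw [abs_mul]
    have := mul_le_mul_of_nonneg_left (abs_cos_le_one (2 * π * y)) (abs_nonneg ((μ : ℝ) - c))
    linarith

lemma exists_fiberMap_near_linear (μ : ℤ) (c : ℝ) : ∃ r₀ : ℝ, 0 < r₀ ∧ ∀ r, r < r₀ → ∀ x x' : ℝ,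
    |x| ≤ r → |x'| ≤ r →
    |fiberMap μ c x - fiberMap μ c x' - c * (x - x')| ≤ 1 / 10 * |x - x'| := by
  have hc : Continuous fun x : ℝ => (μ : ℝ) - (μ - c) * cos (2 * π * x) - c := by fun_prop
  obtain ⟨r₀, hr₀, H⟩ := Metric.continuousAt_iff.1 (hc.continuousAt (x := 0)) (1 / 10) (by norm_num)
  refine ⟨r₀, hr₀, fun r hr x x' hx hx' => ?_⟩
  have := Convex.norm_image_sub_le_of_norm_hasDerivWithin_le (s := Icc (-r) r) (x := x') (y := x)
    (f := fun x => fiberMap μ c x - c * x)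
    (fun y _ => ((hasDerivAt_fiberMap μ c y).sub
      ((hasDerivAt_id y).const_mul c)).hasDerivWithinAt) (C := 1 / 10)
    (fun y hy => ?_) (convex_Icc _ _) (abs_le.1 hx') (abs_le.1 hx)
  · rw [Real.norm_eq_abs, Real.norm_eq_abs] at this
    convert this using 2
    ring
  · have h1 := H (x := y) (by
      rw [Real.dist_eq, sub_zero]
      exact (abs_le.2 hy).trans_lt hr)
    rw [Real.dist_eq] at h1
    simp only [mul_zero, cos_zero, mul_one, sub_sub_cancel, sub_self, sub_zero] at h1
    rw [Real.norm_eq_abs, mul_one]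
    exact h1.le

lemma fiberMap_add_one (μ : ℤ) (c x : ℝ) : fiberMap μ c (x + 1) = fiberMap μ c x + μ := by
  unfold fiberMap
  rw [show 2 * π * (x + 1) = 2 * π * x + 2 * π by ring, sin_add_two_pi]
  ring

lemma fiberMap_neg (μ : ℤ) (c x : ℝ) : fiberMap μ c (-x) = -fiberMap μ c x := by
  unfold fiberMap
  rw [show 2 * π * -x = -(2 * π * x) by ring, sin_neg]
  ring

lemma contDiff_skewMap (μ lam : ℤ) (c : ℝ) : ContDiff ℝ 1 (skewMap μ lam c) := by
  unfold skewMap fiberMap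
  fun_prop

lemma hasFDerivAt_skewMap (μ lam : ℤ) (c : ℝ) (p : ℝ × ℝ) :
    HasFDerivAt (skewMap μ lam c)
      ((((μ : ℝ) - (μ - c) * cos (2 * π * p.1)) • ContinuousLinearMap.fst ℝ ℝ ℝ
        + (cos (π * p.2) * π) • ContinuousLinearMap.snd ℝ ℝ ℝ).prod
        ((lam : ℝ) • ContinuousLinearMap.snd ℝ ℝ ℝ)) p := by
  have h1 := (hasDerivAt_fiberMap μ c p.1).comp_hasFDerivAt p
    (hasFDerivAt_fst (𝕜 := ℝ) (E := ℝ) (F := ℝ) (p := p))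
  have h2 : HasDerivAt (fun y : ℝ => sin (π * y)) (cos (π * p.2) * π) p.2 := by
    simpa using ((hasDerivAt_id p.2).const_mul π).sin
  have h3 := h2.comp_hasFDerivAt p (hasFDerivAt_snd (𝕜 := ℝ) (E := ℝ) (F := ℝ) (p := p))
  have h4 := (hasFDerivAt_snd (𝕜 := ℝ) (E := ℝ) (F := ℝ) (p := p)).const_mul (lam : ℝ)
  exact (h1.add h3).prodMk h4

/-! ### Perturbations of the unperturbed map -/

/-- A linear map of the plane with vanishing determinant and nonzero lower right entry is not
onto. -/
lemma not_surjective_of_det_eq_zero (T : ℝ × ℝ →L[ℝ] ℝ × ℝ) (hD : (T (0, 1)).2 ≠ 0)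
    (hdet : (T (1, 0)).1 * (T (0, 1)).2 - (T (0, 1)).1 * (T (1, 0)).2 = 0) :
    ¬ Function.Surjective T := by
  intro hs
  obtain ⟨⟨a, b⟩, hab⟩ := hs (1, 0)
  have h : ((a, b) : ℝ × ℝ) = a • ((1, 0) : ℝ × ℝ) + b • ((0, 1) : ℝ × ℝ) := by ext <;> simp
  rw [h, map_add, map_smul, map_smul] at hab
  have h1 := congrArg Prod.fst hab
  have h2 := congrArg Prod.snd hab
  simp only [Prod.fst_add, Prod.snd_add, Prod.smul_fst, Prod.smul_snd, smul_eq_mul] at h1 h2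
  apply hD
  linear_combination (-(T (0, 1)).2) * h1 + (T (0, 1)).1 * h2 + a * hdet

lemma exists_critical_point {μ lam : ℤ} {c : ℝ} {G : ℝ × ℝ → ℝ × ℝ} (hG : ContDiff ℝ 1 G)
    (hlam : 10 ≤ |(lam : ℝ)|) (hμ : 2 ≤ |(μ : ℝ)|)
    (hc : (c = -(1 / 2) ∧ 0 < (μ : ℝ)) ∨ (c = 1 / 2 ∧ (μ : ℝ) < 0))
    (hd : ∀ x, ‖fderiv ℝ G x - fderiv ℝ (skewMap μ lam c) x‖ ≤ 1 / 20) :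
    ∃ z : ℝ × ℝ, ¬ Function.Surjective (fderiv ℝ G z) := by
  -- The entries of `DG` are `1 / 20`-close to those of the derivative of the unperturbed map.
  have hent : ∀ x v : ℝ × ℝ, ‖v‖ ≤ 1 →
      |(fderiv ℝ G x v).1 - (fderiv ℝ (skewMap μ lam c) x v).1| ≤ 1 / 20 ∧
      |(fderiv ℝ G x v).2 - (fderiv ℝ (skewMap μ lam c) x v).2| ≤ 1 / 20 := by
    intro x v hv
    have h1 := (fderiv ℝ G x - fderiv ℝ (skewMap μ lam c) x).le_opNorm v
    have h2 : ‖(fderiv ℝ G x - fderiv ℝ (skewMap μ lam c) x) v‖ ≤ 1 / 20 := by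
      have := hd x
      nlinarith [norm_nonneg (fderiv ℝ G x - fderiv ℝ (skewMap μ lam c) x), norm_nonneg v]
    exact ⟨(norm_fst_le _).trans h2, (norm_snd_le _).trans h2⟩
  have n1 : ‖((1, 0) : ℝ × ℝ)‖ ≤ 1 := by simp [Prod.norm_def]
  have n2 : ‖((0, 1) : ℝ × ℝ)‖ ≤ 1 := by simp [Prod.norm_def]
  have hF : ∀ x, fderiv ℝ (skewMap μ lam c) x = _ := fun x => (hasFDerivAt_skewMap μ lam c x).fderiv
  set det : ℝ × ℝ → ℝ := fun z => (fderiv ℝ G z (1, 0)).1 * (fderiv ℝ G z (0, 1)).2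
    - (fderiv ℝ G z (0, 1)).1 * (fderiv ℝ G z (1, 0)).2 with hdet
  have hcont : Continuous det := by
    have hf : Continuous (fderiv ℝ G) := hG.continuous_fderiv (by norm_num)
    fun_prop
  have hD : ∀ z, |(fderiv ℝ G z (0, 1)).2 - lam| ≤ 1 / 20 := by
    intro z
    have := (hent z (0, 1) n2).2
    rw [hF] at this
    simpa using this
  have hC : ∀ z, |(fderiv ℝ G z (1, 0)).2| ≤ 1 / 20 := by
    intro z
    have := (hent z (1, 0) n1).2
    rw [hF] at this
    simpa using this
  -- At height `1 / 2` the unperturbed derivative is diagonal.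
  have hB : ∀ x, |(fderiv ℝ G (x, 1 / 2) (0, 1)).1| ≤ 1 / 20 := by
    intro x
    have := (hent (x, 1 / 2) (0, 1) n2).1
    rw [hF] at this
    have h0 : cos (π * 2⁻¹) = 0 := by rw [← div_eq_mul_inv]; exact cos_pi_div_two
    simpa [h0] using this
  have hA0 : |(fderiv ℝ G (0, 1 / 2) (1, 0)).1 - c| ≤ 1 / 20 := by
    have := (hent (0, 1 / 2) (1, 0) n1).1
    rw [hF] at this
    simpa using this
  have hA1 : |(fderiv ℝ G (1 / 2, 1 / 2) (1, 0)).1 - (2 * μ - c)| ≤ 1 / 20 := by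
    have := (hent (1 / 2, 1 / 2) (1, 0) n1).1
    rw [hF] at this
    have h0 : cos (2 * π * 2⁻¹) = -1 := by
      rw [show 2 * π * 2⁻¹ = π by ring, cos_pi]
    rw [show 2 * (μ : ℝ) - c = μ - (c - μ) by ring]
    simpa [h0] using this
  have hzero : ∃ z, det z = 0 := by
    have hBC : ∀ x, |(fderiv ℝ G (x, 1 / 2) (0, 1)).1 * (fderiv ℝ G (x, 1 / 2) (1, 0)).2| ≤ 1 := by
      intro x
      rw [abs_mul]
      nlinarith [hB x, hC (x, 1 / 2), abs_nonneg (fderiv ℝ G (x, 1 / 2) (0, 1)).1,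
        abs_nonneg (fderiv ℝ G (x, 1 / 2) (1, 0)).2]
    have b0 := abs_le.1 (hBC 0)
    have b1 := abs_le.1 (hBC (1 / 2))
    have d0 := abs_le.1 (hD (0, 1 / 2))
    have d1 := abs_le.1 (hD (1 / 2, 1 / 2))
    rw [abs_le] at hA0 hA1
    have hr := mem_range_of_exists_le_of_exists_ge (c := (0 : ℝ)) hcont
    rcases hc with ⟨rfl, hμ0⟩ | ⟨rfl, hμ0⟩
    · rw [abs_of_pos hμ0] at hμ
      rcases le_abs.1 hlam with hl | hl
      · exact hr ⟨(0, 1 / 2), by simp only [hdet]; nlinarith⟩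
          ⟨(1 / 2, 1 / 2), by simp only [hdet]; nlinarith⟩
      · exact hr ⟨(1 / 2, 1 / 2), by simp only [hdet]; nlinarith⟩
          ⟨(0, 1 / 2), by simp only [hdet]; nlinarith⟩
    · rw [abs_of_neg hμ0] at hμ
      rcases le_abs.1 hlam with hl | hl
      · exact hr ⟨(1 / 2, 1 / 2), by simp only [hdet]; nlinarith⟩
          ⟨(0, 1 / 2), by simp only [hdet]; nlinarith⟩
      · exact hr ⟨(0, 1 / 2), by simp only [hdet]; nlinarith⟩
          ⟨(1 / 2, 1 / 2), by simp only [hdet]; nlinarith⟩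
  obtain ⟨z, hz⟩ := hzero
  refine ⟨z, not_surjective_of_det_eq_zero _ (fun h0 => ?_) hz⟩
  have := hD z
  rw [h0, zero_sub, abs_neg] at this
  linarith

/-- Every map close to the unperturbed one satisfies the hypotheses of the transitivity
argument. -/
lemma isSteep_of_near {μ lam : ℤ} {c r : ℝ} (hr : 0 < r) (hr' : r ≤ 1 / 2)
    (hCr : (|(μ : ℝ)| + |μ - c| + 1) * r ≤ 1 / 2) (hlam : 80 ≤ r * (|(lam : ℝ)| - 10))
    (hc : c = -(1 / 2) ∨ c = 1 / 2)
    (hlin : ∀ x x' : ℝ, |x| ≤ r → |x'| ≤ r →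
      |fiberMap μ c x - fiberMap μ c x' - c * (x - x')| ≤ 1 / 10 * |x - x'|)
    {G : ℝ × ℝ → ℝ × ℝ} (hG : ContDiff ℝ 1 G)
    (hG1 : ∀ p : ℝ × ℝ, G (p.1 + 1, p.2) = G p + ((μ : ℝ), 0))
    (hG2 : ∀ p : ℝ × ℝ, G (-p.1, p.2 + 1) = (-(G p).1, (G p).2 + (lam : ℝ)))
    (h0 : ∀ x, ‖G x - skewMap μ lam c x‖ ≤ r / 10)
    (hd : ∀ x, ‖fderiv ℝ G x - fderiv ℝ (skewMap μ lam c) x‖ ≤ r / 10) :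
    IsSteep G (fiberMap μ c) μ lam (|(μ : ℝ)| + |μ - c| + 1) r := by
  have hF := contDiff_skewMap μ lam c
  have hE : ∀ p q, ‖(G p - skewMap μ lam c p) - (G q - skewMap μ lam c q)‖ ≤ r / 10 * ‖p - q‖ := by
    intro p q
    have hGd := hG.differentiable (by norm_num)
    have hFd := hF.differentiable (by norm_num)
    refine Convex.norm_image_sub_le_of_norm_fderiv_le (𝕜 := ℝ) (s := univ)
      (f := fun p => G p - skewMap μ lam c p)
      (fun x _ => (hGd x).sub (hFd x)) (fun x _ => ?_) convex_univ (mem_univ _) (mem_univ _)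
    rw [fderiv_fun_sub (hGd x) (hFd x)]
    exact hd x
  have hE1 : ∀ p q, |((G p).1 - (fiberMap μ c p.1 + sin (π * p.2)))
      - ((G q).1 - (fiberMap μ c q.1 + sin (π * q.2)))| ≤ r / 10 * (|p.1 - q.1| + |p.2 - q.2|) := by
    intro p q
    refine (norm_fst_le _).trans ((hE p q).trans (mul_le_mul_of_nonneg_left ?_ (by linarith)))
    exact max_le (le_add_of_nonneg_right (abs_nonneg _)) (le_add_of_nonneg_left (abs_nonneg _))
  have hE2 : ∀ p q, |((G p).2 - lam * p.2) - ((G q).2 - lam * q.2)|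
      ≤ r / 10 * (|p.1 - q.1| + |p.2 - q.2|) := by
    intro p q
    refine (norm_snd_le _).trans ((hE p q).trans (mul_le_mul_of_nonneg_left ?_ (by linarith)))
    exact max_le (le_add_of_nonneg_right (abs_nonneg _)) (le_add_of_nonneg_left (abs_nonneg _))
  refine
    { r_pos := hr
      r_le := hr'
      C_mul_r := hCr
      lam_large := hlam
      cont := hG.continuous
      add_one := fun x y => hG1 (x, y)
      add_two := fun x y => ?_
      near_fst := fun p => (norm_fst_le _).trans (h0 p)
      near_snd := fun p => (norm_snd_le _).trans (h0 p)
      f_lip := fun x x' => (fiberMap_lipschitz μ c x x').trans ?_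
      lip_fst := fun p q => ?_
      lip_snd := fun p q => ?_
      contracting := fun p q hp hq hpq => ?_
      covering := ?_ }
  · have h1 := hG2 (-x, y + 1)
    have h2 := hG2 (x, y)
    simp only [neg_neg] at h1 h2
    rw [h2, show y + 1 + 1 = y + 2 by ring] at h1
    rw [h1]
    ext <;> simp
    ring
  · exact mul_le_mul_of_nonneg_right (by linarith) (abs_nonneg _)
  · have e := abs_le.1 (hE1 p q)
    have e1 := fiberMap_lipschitz μ c p.1 q.1
    have e2 := abs_le.1 (abs_sin_pi_sub_le p.2 q.2)
    have e3 := abs_nonneg (p.1 - q.1)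
    have e4 := abs_nonneg (p.2 - q.2)
    have e5 : r / 10 * (|p.1 - q.1| + |p.2 - q.2|) ≤ |p.1 - q.1| + |p.2 - q.2| := by nlinarith
    rw [add_mul (|(μ : ℝ)| + |μ - c|), one_mul, abs_le]
    rw [abs_le] at e1
    constructor <;> linarith [e.1, e.2, e1.1, e1.2, e2.1, e2.2]
  · have e := hE2 p q
    have e3 := abs_nonneg (p.1 - q.1)
    have e4 := abs_nonneg (p.2 - q.2)
    rw [show (G p).2 - (G q).2 - lam * (p.2 - q.2)
      = ((G p).2 - lam * p.2) - ((G q).2 - lam * q.2) by ring]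
    nlinarith
  · have e := hE1 p q
    rw [hpq, sub_self, abs_zero, add_zero] at e
    have e1 := hlin p.1 q.1 hp hq
    have e3 := abs_nonneg (p.1 - q.1)
    have e2 : |c * (p.1 - q.1)| = 1 / 2 * |p.1 - q.1| := by
      rw [abs_mul]
      rcases hc with rfl | rfl <;> norm_num [abs_of_pos]
    have e5 : r / 10 * |p.1 - q.1| ≤ 1 / 20 * |p.1 - q.1| := by nlinarith
    have e6 := abs_le.1 e2.le
    rw [abs_le] at e e1 ⊢
    constructor <;> linarith [e.1, e.2, e1.1, e1.2, e6.1, e6.2]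
  · have hz : fiberMap μ c 0 = 0 := by simp [fiberMap]
    have e := hlin (r / 2) 0 (by rw [abs_of_pos] <;> linarith) (by simpa using hr.le)
    rw [fiberMap_neg]
    rw [hz, sub_zero, sub_zero, abs_of_pos (show 0 < r / 2 by linarith), abs_le] at e
    rcases hc with rfl | rfl
    · right
      constructor <;> linarith [e.1, e.2]
    · left
      constructor <;> linarith [e.1, e.2]

/-- For every integer `μ` with `|μ| > 1` there is `Λ > 0` such that: for every odd integer
`lam` with `|lam| ≥ Λ`, there are `ε > 0` and a `C¹` map `F : ℝ² → ℝ²` with the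
Klein-bottle equivariance over `diag(μ, lam)` (hence descending to an endomorphism of `𝕂²`
homotopic to `L[x,y] = [μx, lam·y]`), such that every `C¹` map `G` with the same
equivariance and `sup_x (‖G x − F x‖ + ‖DG x − DF x‖) < ε` has a critical point and
induces a transitive endomorphism of the Klein bottle. -/
theorem robustly_transitive_with_critical_points_klein_bottle :
    ∀ μ : ℤ, 1 < |μ| →
    ∃ Λ : ℝ, 0 < Λ ∧
      ∀ lam : ℤ, Odd lam → Λ ≤ |(lam : ℝ)| →
        ∃ (ε : ℝ) (F : ℝ × ℝ → ℝ × ℝ), 0 < ε ∧ ContDiff ℝ 1 F ∧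
          (∀ p : ℝ × ℝ, F (p.1 + 1, p.2) = F p + ((μ : ℝ), 0)) ∧
          (∀ p : ℝ × ℝ, F (-p.1, p.2 + 1) = (-(F p).1, (F p).2 + (lam : ℝ))) ∧
          ∀ G : ℝ × ℝ → ℝ × ℝ, ContDiff ℝ 1 G →
            (∀ p : ℝ × ℝ, G (p.1 + 1, p.2) = G p + ((μ : ℝ), 0)) →
            (∀ p : ℝ × ℝ, G (-p.1, p.2 + 1) = (-(G p).1, (G p).2 + (lam : ℝ))) →
            (∀ x : ℝ × ℝ, ‖G x - F x‖ + ‖fderiv ℝ G x - fderiv ℝ F x‖ < ε) →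
            (∃ z : ℝ × ℝ, ¬ Function.Surjective (fderiv ℝ G z)) ∧
            (∀ U V : Set (ℝ × ℝ), IsOpen U → IsOpen V → U.Nonempty → V.Nonempty →
              ∃ n : ℕ, 1 ≤ n ∧ ∃ x ∈ U, ∃ v ∈ V, ∃ k m : ℤ,
                G^[n] x = ((-1 : ℝ) ^ k * v.1 + (m : ℝ), v.2 + (k : ℝ))) := by
  intro μ hμ
  obtain ⟨c, hc⟩ : ∃ c : ℝ, (c = -(1 / 2) ∧ 0 < (μ : ℝ)) ∨ (c = 1 / 2 ∧ (μ : ℝ) < 0) := by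
    rcases lt_trichotomy μ 0 with h | h | h
    · exact ⟨1 / 2, Or.inr ⟨rfl, by exact_mod_cast h⟩⟩
    · simp [h] at hμ
    · exact ⟨-(1 / 2), Or.inl ⟨rfl, by exact_mod_cast h⟩⟩
  have hμ2 : 2 ≤ |(μ : ℝ)| := by exact_mod_cast hμ
  obtain ⟨r₀, hr₀, hlin⟩ := exists_fiberMap_near_linear μ c
  set C : ℝ := |(μ : ℝ)| + |μ - c| + 1 with hC
  have hC0 : 0 < C := by positivity
  obtain ⟨r, hr, hr1, hr2, hr3⟩ : ∃ r : ℝ, 0 < r ∧ r ≤ 1 / 2 ∧ C * r ≤ 1 / 2 ∧ r < r₀ := by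
    refine ⟨min (1 / 2) (min (1 / 2 / C) (r₀ / 2)), by positivity, min_le_left _ _, ?_, ?_⟩
    · rw [← le_div_iff₀' hC0]
      exact (min_le_right _ _).trans (min_le_left _ _)
    · exact ((min_le_right _ _).trans (min_le_right _ _)).trans_lt (by linarith)
  refine ⟨80 / r + 10, by positivity, fun lam _ hlam => ?_⟩
  have hlam' : 80 ≤ r * (|(lam : ℝ)| - 10) := by
    rw [← div_le_iff₀' hr]
    linarith
  have hlam10 : 10 ≤ |(lam : ℝ)| := by
    have : 0 < 80 / r := by positivity
    linarith
  refine ⟨r / 10, skewMap μ lam c, by positivity, contDiff_skewMap μ lam c, ?_, ?_, ?_⟩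
  · intro p
    ext
    · simp only [skewMap, fiberMap_add_one, Prod.fst_add]
      ring
    · simp [skewMap]
  · intro p
    ext
    · simp only [skewMap, fiberMap_neg]
      rw [show π * (p.2 + 1) = π * p.2 + π by ring, sin_add_pi]
      ring
    · simp only [skewMap]
      ring
  · intro G hG hG1 hG2 hclose
    have h0 : ∀ x, ‖G x - skewMap μ lam c x‖ ≤ r / 10 := fun x =>
      (le_add_of_nonneg_right (norm_nonneg _)).trans (hclose x).le
    have hd : ∀ x, ‖fderiv ℝ G x - fderiv ℝ (skewMap μ lam c) x‖ ≤ r / 10 := fun x =>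
      (le_add_of_nonneg_left (norm_nonneg _)).trans (hclose x).le
    refine ⟨exists_critical_point hG hlam10 hμ2 hc fun x => (hd x).trans (by linarith), ?_⟩
    exact (isSteep_of_near hr hr1 hr2 hlam' (hc.imp And.left And.left) (hlin r hr3)
      hG hG1 hG2 h0 hd).transitive
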